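/- Let X ∈ {E,A}. For every normal logic program P: Cnˣ_o(τ_EH(P)) = Cnˣ_o(τ^∨_EH(P)), Cnˣ_o(τ_EB(P)) ⊆ Cnˣ_o(τ_EH(P)), Cnˣ_o(τ_EB(P)) ⊆ Cnˣ_o(τ_HP(P)), Cnˣ_o(τ_HP(P)) ⊆ Cnˣ_o(τ^∨_HP(P)), and Cnˣ_o(τ_EB(P)) ⊆ Cnˣ_o(τ^∨_EB(P)); if P is moreover safe, then also Cnˣ_o(τ_EH(P)) ⊆ Cnˣ_o(τ_EB(P)). For every disjunctive logic program P: Cnˣ_o(τ^∨_EB(P)) ⊆ Cnˣ_o(τ^∨_HP(P)); and if P is safe, Cnˣ_o(τ^∨_EH(P)) ⊆ Cnˣ_o(τ^∨_EB(P)). -/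

import Mathlib

set_option autoImplicit false

/-! # First-order autoepistemic logic (FO-AEL): syntax -/

structure Sig : Type 1 where
  Func : Type
  Pred : Type
  arF : Func → ℕ
  arP : Pred → ℕ

inductive Term (S : Sig) : Type
  | var : ℕ → Term S
  | func : (f : S.Func) → (Fin (S.arF f) → Term S) → Term S

inductive Formula (S : Sig) : Type
  | atom : (p : S.Pred) → (Fin (S.arP p) → Term S) → Formula S
  | eq : Term S → Term S → Formula S
  | not : Formula S → Formula S
  | and : Formula S → Formula S → Formula S
  | ex : ℕ → Formula S → Formula S
  | box : Formula S → Formula S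

namespace Term

variable {S : Sig}

/-- A term is ground if it contains no variables; ground terms are the *names*. -/
def isGround : Term S → Prop
  | var _ => False
  | func _ ts => ∀ i, (ts i).isGround

def hasVar (x : ℕ) : Term S → Prop
  | var y => y = x
  | func _ ts => ∃ i, (ts i).hasVar x

/-- Application of a partial (name) substitution to a term. -/
def subst (β : ℕ → Option (Term S)) : Term S → Term S
  | var x => (β x).getD (var x)
  | func f ts => func f (fun i => (ts i).subst β)

/-- The function symbols occurring in a term. -/
def funcs : Term S → Set S.Func
  | var _ => ∅
  | func f ts => insert f (⋃ i, (ts i).funcs)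

/-- `t` is a name (ground term) over the set `F` of function symbols. -/
def isNameOf (F : Set S.Func) : Term S → Prop
  | var _ => False
  | func f ts => f ∈ F ∧ ∀ i, (ts i).isNameOf F

end Term

namespace Formula

variable {S : Sig}

/-- A formula is objective if it is 𝖫-free. -/
def isObjective : Formula S → Prop
  | atom _ _ => True
  | eq _ _ => True
  | not φ => φ.isObjective
  | and φ ψ => φ.isObjective ∧ ψ.isObjective
  | ex _ φ => φ.isObjective
  | box _ => False

def isGround : Formula S → Prop
  | atom _ ts => ∀ i, (ts i).isGround
  | eq t₁ t₂ => t₁.isGround ∧ t₂.isGround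
  | not φ => φ.isGround
  | and φ ψ => φ.isGround ∧ ψ.isGround
  | ex _ _ => False
  | box φ => φ.isGround

def isAtomic : Formula S → Prop
  | atom _ _ => True
  | eq _ _ => True
  | not _ => False
  | and _ _ => False
  | ex _ _ => False
  | box _ => False

/-- The modal operator 𝖫 occurs only applied to (objective) atomic formulas. -/
def boxAtomic : Formula S → Prop
  | atom _ _ => True
  | eq _ _ => True
  | not φ => φ.boxAtomic
  | and φ ψ => φ.boxAtomic ∧ ψ.boxAtomic
  | ex _ φ => φ.boxAtomic
  | box φ => φ.isAtomic

/-- Propositional formulas: built from 0-ary predicates only. -/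
def isPropositional : Formula S → Prop
  | atom p _ => S.arP p = 0
  | eq _ _ => False
  | not φ => φ.isPropositional
  | and φ ψ => φ.isPropositional ∧ ψ.isPropositional
  | ex _ _ => False
  | box _ => False

def freeIn (x : ℕ) : Formula S → Prop
  | atom _ ts => ∃ i, (ts i).hasVar x
  | eq t₁ t₂ => t₁.hasVar x ∨ t₂.hasVar x
  | not φ => φ.freeIn x
  | and φ ψ => φ.freeIn x ∨ ψ.freeIn x
  | ex y φ => x ≠ y ∧ φ.freeIn x
  | box φ => φ.freeIn x

/-- A formula is closed (a sentence) if it has no free variables. -/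
def closed (φ : Formula S) : Prop := ∀ x, ¬ φ.freeIn x

/-- Capture-avoiding application of a partial name substitution (values are ground). -/
def subst (β : ℕ → Option (Term S)) : Formula S → Formula S
  | atom p ts => atom p (fun i => (ts i).subst β)
  | eq t₁ t₂ => eq (t₁.subst β) (t₂.subst β)
  | not φ => not (φ.subst β)
  | and φ ψ => and (φ.subst β) (ψ.subst β)
  | ex y φ => ex y (φ.subst (fun z => if z = y then none else β z))
  | box φ => box (φ.subst β)

def funcs : Formula S → Set S.Func
  | atom _ ts => ⋃ i, (ts i).funcs
  | eq t₁ t₂ => t₁.funcs ∪ t₂.funcs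
  | not φ => φ.funcs
  | and φ ψ => φ.funcs ∪ ψ.funcs
  | ex _ φ => φ.funcs
  | box φ => φ.funcs

def preds : Formula S → Set S.Pred
  | atom p _ => {p}
  | eq _ _ => ∅
  | not φ => φ.preds
  | and φ ψ => φ.preds ∪ ψ.preds
  | ex _ φ => φ.preds
  | box φ => φ.preds

/-- `φ ∨ ψ` as an abbreviation: `¬(¬φ ∧ ¬ψ)`. -/
def or (φ ψ : Formula S) : Formula S := not (and (not φ) (not ψ))

/-- `φ ⊃ ψ` as an abbreviation: `¬(φ ∧ ¬ψ)`. -/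
def imp (φ ψ : Formula S) : Formula S := not (and φ (not ψ))

/-- `∀x.φ` as an abbreviation: `¬∃x.¬φ`. -/
def all (x : ℕ) (φ : Formula S) : Formula S := not (ex x (not φ))

end Formula

/-! ## Semantics -/

structure Interp (S : Sig) where
  U : Type
  nonempty : Nonempty U
  interpF : (f : S.Func) → (Fin (S.arF f) → U) → U
  interpP : (p : S.Pred) → (Fin (S.arP p) → U) → Prop

noncomputable def Interp.dflt {S : Sig} (w : Interp S) : w.U := Classical.choice w.nonempty

def Term.eval {S : Sig} (w : Interp S) (B : ℕ → w.U) : Term S → w.U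
  | Term.var x => B x
  | Term.func f ts => w.interpF f (fun i => (ts i).eval w B)

/-- Evaluation of a ground term (the assignment is irrelevant). -/
noncomputable def Term.evalG {S : Sig} (w : Interp S) (t : Term S) : w.U :=
  t.eval w (fun _ => w.dflt)

/-- An individual is named if some name (ground term) denotes it. -/
def IsNamed {S : Sig} (w : Interp S) (k : w.U) : Prop :=
  ∃ t : Term S, t.isGround ∧ Term.evalG w t = k

/-- A name substitution `β` is associated with the variable assignment `B`:
its domain is exactly the set of variables whose `B`-value is named, and
it assigns to each such variable a name denoting its `B`-value. -/
def Assoc {S : Sig} (w : Interp S) (B : ℕ → w.U) (β : ℕ → Option (Term S)) : Prop :=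
  ∀ x : ℕ,
    (IsNamed w (B x) → (β x).isSome) ∧
    (∀ t : Term S, β x = some t → t.isGround ∧ Term.evalG w t = B x)

/-- The two semantics: any-name (E) and all-name (A). -/
inductive Sem : Type
  | any
  | all

/-- Satisfaction of a formula in an autoepistemic interpretation `⟨w,Γ⟩`
under a variable assignment, for the any-name (E) resp. all-name (A) semantics. -/
def Sat {S : Sig} (X : Sem) (w : Interp S) (Γ : Set (Formula S)) :
    Formula S → (ℕ → w.U) → Prop
  | Formula.atom p ts, B => w.interpP p (fun i => (ts i).eval w B)
  | Formula.eq t₁ t₂, B => t₁.eval w B = t₂.eval w B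
  | Formula.not φ, B => ¬ Sat X w Γ φ B
  | Formula.and φ ψ, B => Sat X w Γ φ B ∧ Sat X w Γ ψ B
  | Formula.ex x φ, B => ∃ u : w.U, Sat X w Γ φ (Function.update B x u)
  | Formula.box φ, B =>
      match X with
      | Sem.any => ∃ β, Assoc w B β ∧ (φ.subst β).closed ∧ φ.subst β ∈ Γ
      | Sem.all => ∀ β, Assoc w B β → (φ.subst β).closed ∧ φ.subst β ∈ Γ

def ModelsF {S : Sig} (X : Sem) (w : Interp S) (Γ : Set (Formula S)) (φ : Formula S) : Prop :=
  ∀ B : ℕ → w.U, Sat X w Γ φ B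

def ModelsT {S : Sig} (X : Sem) (w : Interp S) (Γ Φ : Set (Formula S)) : Prop :=
  ∀ φ ∈ Φ, ModelsF X w Γ φ

/-- `Φ ⊨ˣ_Γ φ`. -/
def Entails {S : Sig} (X : Sem) (Φ Γ : Set (Formula S)) (φ : Formula S) : Prop :=
  ∀ w : Interp S, ModelsT X w Γ Φ → ModelsF X w Γ φ

/-- The standard names assumption: all names are interpreted distinctly
and every individual is named. -/
def SNA {S : Sig} (w : Interp S) : Prop :=
  (∀ t₁ t₂ : Term S, t₁.isGround → t₂.isGround → Term.evalG w t₁ = Term.evalG w t₂ → t₁ = t₂) ∧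
  (∀ k : w.U, IsNamed w k)

/-- Entailment restricted to interpretations satisfying the standard names assumption. -/
def EntailsSN {S : Sig} (X : Sem) (Φ Γ : Set (Formula S)) (φ : Formula S) : Prop :=
  ∀ w : Interp S, SNA w → ModelsT X w Γ Φ → ModelsF X w Γ φ

/-- `T` is a stableˣ expansion of `Φ`. -/
def StableExp {S : Sig} (X : Sem) (Φ T : Set (Formula S)) : Prop :=
  T = {φ | Entails X Φ T φ}

def objOf {S : Sig} (T : Set (Formula S)) : Set (Formula S) :=
  {φ ∈ T | φ.isObjective}

def ogOf {S : Sig} (T : Set (Formula S)) : Set (Formula S) :=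
  {φ ∈ T | φ.isObjective ∧ φ.isGround}

def ogaOf {S : Sig} (T : Set (Formula S)) : Set (Formula S) :=
  {φ ∈ T | φ.isObjective ∧ φ.isGround ∧ φ.isAtomic}

def Consistent {S : Sig} (T : Set (Formula S)) : Prop := T ≠ Set.univ

/-- `Φ₁ ≡ˣ Φ₂`: same stableˣ expansions. -/
def ExpEquiv {S : Sig} (X : Sem) (Φ₁ Φ₂ : Set (Formula S)) : Prop :=
  ∀ T, StableExp X Φ₁ T ↔ StableExp X Φ₂ T

/-- `Φ₁ ≡ˣ_γ Φ₂` for a selector `sel` (e.g. `ogaOf`): the stableˣ expansions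
correspond with respect to `sel`. -/
def ExpEquivSel {S : Sig} (X : Sem) (sel : Set (Formula S) → Set (Formula S))
    (Φ₁ Φ₂ : Set (Formula S)) : Prop :=
  (∀ T, StableExp X Φ₁ T → ∃ T', StableExp X Φ₂ T' ∧ sel T = sel T') ∧
  (∀ T', StableExp X Φ₂ T' → ∃ T, StableExp X Φ₁ T ∧ sel T = sel T')

/-- Autoepistemicˣ consequences of `Φ`. -/
def Cn {S : Sig} (X : Sem) (Φ : Set (Formula S)) : Set (Formula S) :=
  {φ | ∀ T, StableExp X Φ T → φ ∈ T}

def CnO {S : Sig} (X : Sem) (Φ : Set (Formula S)) : Set (Formula S) :=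
  {φ ∈ Cn X Φ | φ.isObjective}

def CnOg {S : Sig} (X : Sem) (Φ : Set (Formula S)) : Set (Formula S) :=
  {φ ∈ Cn X Φ | φ.isObjective ∧ φ.isGround}

/-! ## Logic programs -/

structure PAtom (S : Sig) where
  p : S.Pred
  args : Fin (S.arP p) → Term S

namespace PAtom

variable {S : Sig}

def toFormula (a : PAtom S) : Formula S := Formula.atom a.p a.args

def isGround (a : PAtom S) : Prop := ∀ i, (a.args i).isGround

def hasVar (x : ℕ) (a : PAtom S) : Prop := ∃ i, (a.args i).hasVar x

def substA (σ : ℕ → Term S) (a : PAtom S) : PAtom S :=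
  ⟨a.p, fun i => (a.args i).subst (fun x => some (σ x))⟩

def funcs (a : PAtom S) : Set S.Func := ⋃ i, (a.args i).funcs

end PAtom

/-- A (disjunctive) rule `h₁ | … | h_l ← b₁,…,b_m, not c₁,…,not c_n`,
together with a list of the variables occurring in it. -/
structure Rule (S : Sig) where
  head : List (PAtom S)
  pos : List (PAtom S)
  neg : List (PAtom S)
  vars : List ℕ

namespace Rule

variable {S : Sig}

def atoms (r : Rule S) : List (PAtom S) := r.head ++ r.pos ++ r.neg

def hasVar (x : ℕ) (r : Rule S) : Prop := ∃ a ∈ r.atoms, PAtom.hasVar x a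

/-- Well-formedness: at least one head atom, and `vars` lists all variables of the rule. -/
def wf (r : Rule S) : Prop := r.head ≠ [] ∧ ∀ x, r.hasVar x → x ∈ r.vars

def isNormal (r : Rule S) : Prop := r.head.length = 1

def isGround (r : Rule S) : Prop := (∀ a ∈ r.atoms, a.isGround) ∧ r.vars = []

def isSafe (r : Rule S) : Prop := ∀ x, r.hasVar x → ∃ a ∈ r.pos, PAtom.hasVar x a

def isPositive (r : Rule S) : Prop := r.neg = []

def applySubst (σ : ℕ → Term S) (r : Rule S) : Rule S :=
  ⟨r.head.map (PAtom.substA σ), r.pos.map (PAtom.substA σ), r.neg.map (PAtom.substA σ), []⟩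

end Rule

abbrev Program (S : Sig) := Set (Rule S)

def progWf {S : Sig} (P : Program S) : Prop := ∀ r ∈ P, r.wf
def progNormal {S : Sig} (P : Program S) : Prop := ∀ r ∈ P, r.isNormal
def progGround {S : Sig} (P : Program S) : Prop := ∀ r ∈ P, r.isGround
def progSafe {S : Sig} (P : Program S) : Prop := ∀ r ∈ P, r.isSafe
def progPositive {S : Sig} (P : Program S) : Prop := ∀ r ∈ P, r.isPositive

/-- The function symbols occurring in `P` (part of the signature `Σ_P`). -/
def progFuncs {S : Sig} (P : Program S) : Set S.Func :=
  {f | ∃ r ∈ P, ∃ a ∈ r.atoms, f ∈ a.funcs}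

/-- The predicate symbols occurring in `P` (part of the signature `Σ_P`). -/
def progPreds {S : Sig} (P : Program S) : Set S.Pred :=
  {q | ∃ r ∈ P, ∃ a ∈ r.atoms, a.p = q}

/-- The ambient signature is exactly the signature `Σ_P` of `P`. -/
def fullSig {S : Sig} (P : Program S) : Prop :=
  (∀ f : S.Func, f ∈ progFuncs P) ∧ (∀ q : S.Pred, q ∈ progPreds P)

/-- Standing assumption: `Σ_P` contains a 0-ary function symbol whenever it
has a predicate symbol of arity greater than 0. -/
def goodSig {S : Sig} (P : Program S) : Prop :=
  (∃ q ∈ progPreds P, 0 < S.arP q) → ∃ f ∈ progFuncs P, S.arF f = 0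

/-! ## Embeddings of logic programs into FO-AEL -/

def andAll {S : Sig} : Formula S → List (Formula S) → Formula S
  | φ, [] => φ
  | φ, ψ :: rest => andAll (Formula.and φ ψ) rest

def orAll {S : Sig} : Formula S → List (Formula S) → Formula S
  | φ, [] => φ
  | φ, ψ :: rest => orAll (Formula.or φ ψ) rest

/-- `impOf ants c` is `⋀ ants ⊃ c` (just `c` if there are no antecedents). -/
def impOf {S : Sig} : List (Formula S) → Formula S → Formula S
  | [], c => c
  | a :: rest, c => Formula.imp (andAll a rest) c

/-- Disjunction of a nonempty list (junk value on the empty list,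
which is excluded by rule well-formedness). -/
def disjOf {S : Sig} : List (Formula S) → Formula S
  | [] => Formula.eq (Term.var 0) (Term.var 0)
  | h :: rest => orAll h rest

/-- Universal uclosure over the listed variables. -/
def uclosure {S : Sig} (vs : List ℕ) (φ : Formula S) : Formula S :=
  vs.foldr Formula.all φ

def bodyHP {S : Sig} (r : Rule S) : List (Formula S) :=
  r.pos.map PAtom.toFormula ++ r.neg.map (fun c => Formula.not (Formula.box c.toFormula))

def bodyE {S : Sig} (r : Rule S) : List (Formula S) :=
  r.pos.map (fun b => Formula.and b.toFormula (Formula.box b.toFormula)) ++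
    r.neg.map (fun c => Formula.not (Formula.box c.toFormula))

/-- `τ_HP(r)` resp. `τ^∨_HP(r)`. -/
def embHP {S : Sig} (r : Rule S) : Formula S :=
  uclosure r.vars (impOf (bodyHP r) (disjOf (r.head.map PAtom.toFormula)))

/-- `τ_EB(r)` resp. `τ^∨_EB(r)`. -/
def embEB {S : Sig} (r : Rule S) : Formula S :=
  uclosure r.vars (impOf (bodyE r) (disjOf (r.head.map PAtom.toFormula)))

/-- `τ_EH(r)` resp. `τ^∨_EH(r)`. -/
def embEH {S : Sig} (r : Rule S) : Formula S :=
  uclosure r.vars (impOf (bodyE r)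
    (disjOf (r.head.map (fun h => Formula.and h.toFormula (Formula.box h.toFormula)))))

/-- The unique-names axioms `¬𝖫(t₁=t₂) ⊃ t₁≠t₂` for distinct names of `Σ_P`. -/
def UNAax {S : Sig} (P : Program S) : Set (Formula S) :=
  {φ | ∃ t₁ t₂ : Term S, t₁.isNameOf (progFuncs P) ∧ t₂.isNameOf (progFuncs P) ∧ t₁ ≠ t₂ ∧
        φ = Formula.imp (Formula.not (Formula.box (Formula.eq t₁ t₂)))
              (Formula.not (Formula.eq t₁ t₂))}

/-- The positive introspection axioms `α ⊃ 𝖫α` for objective ground atoms of `Σ_P`. -/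
def PIAax {S : Sig} (P : Program S) : Set (Formula S) :=
  {φ | ∃ a : PAtom S, a.p ∈ progPreds P ∧ (∀ i, (a.args i).isNameOf (progFuncs P)) ∧
        φ = Formula.imp a.toFormula (Formula.box a.toFormula)}

def ruleEmb {S : Sig} (emb : Rule S → Formula S) (P : Program S) : Set (Formula S) :=
  {φ | ∃ r ∈ P, φ = emb r}

def tauHP {S : Sig} (P : Program S) : Set (Formula S) := ruleEmb embHP P ∪ UNAax P
def tauEB {S : Sig} (P : Program S) : Set (Formula S) := ruleEmb embEB P ∪ UNAax P
def tauEH {S : Sig} (P : Program S) : Set (Formula S) := ruleEmb embEH P ∪ UNAax P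
def tauHPv {S : Sig} (P : Program S) : Set (Formula S) := ruleEmb embHP P ∪ PIAax P ∪ UNAax P
def tauEBv {S : Sig} (P : Program S) : Set (Formula S) := ruleEmb embEB P ∪ PIAax P ∪ UNAax P
def tauEHv {S : Sig} (P : Program S) : Set (Formula S) := ruleEmb embEH P ∪ UNAax P
def tauHPminus {S : Sig} (P : Program S) : Set (Formula S) := ruleEmb embHP P
def tauEHvminus {S : Sig} (P : Program S) : Set (Formula S) := ruleEmb embEH P

/-! ## Grounding and stable models -/

/-- The grounding of `P`: all ground instantiations of rules of `P`
obtained by replacing variables with names of `Σ_P`. -/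
def grP {S : Sig} (P : Program S) : Program S :=
  {r' | ∃ r ∈ P, ∃ σ : ℕ → Term S,
        (∀ x, r.hasVar x → (σ x).isNameOf (progFuncs P)) ∧ r' = Rule.applySubst σ r}

/-- A Herbrand interpretation: a set of ground atomic formulas. -/
def HerbrandI {S : Sig} (M : Set (Formula S)) : Prop :=
  ∀ φ ∈ M, φ.isAtomic ∧ φ.isGround

/-- `M` is a Herbrand model of the positive ground program `Q` (relative to the
names of `Σ_P`): rules are satisfied and `t = t ∈ M` for every name `t`. -/
def HerbrandModelOf {S : Sig} (P Q : Program S) (M : Set (Formula S)) : Prop :=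
  HerbrandI M ∧
  (∀ r ∈ Q, (∀ b ∈ r.pos, PAtom.toFormula b ∈ M) → ∃ h ∈ r.head, PAtom.toFormula h ∈ M) ∧
  (∀ t : Term S, t.isNameOf (progFuncs P) → Formula.eq t t ∈ M)

/-- The Gelfond–Lifschitz reduct of `gr(P)` with respect to `M`. -/
def reduct {S : Sig} (P : Program S) (M : Set (Formula S)) : Program S :=
  {r' | ∃ r ∈ grP P, (∀ c ∈ r.neg, PAtom.toFormula c ∉ M) ∧
        r' = ⟨r.head, r.pos, [], r.vars⟩}

/-- `M` is a stable model of `P`: a minimal Herbrand model of the reduct of `gr(P)` w.r.t. `M`. -/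
def isStableModel {S : Sig} (P : Program S) (M : Set (Formula S)) : Prop :=
  HerbrandModelOf P (reduct P M) M ∧
  ∀ M', M' ⊆ M → HerbrandModelOf P (reduct P M) M' → M' = M

/-! ## First-order theories and classes thereof -/

/-- An FO theory: a set of objective sentences. -/
def FOTheory {S : Sig} (Φ : Set (Formula S)) : Prop :=
  ∀ φ ∈ Φ, φ.isObjective ∧ φ.closed

def theoryFuncs {S : Sig} (Φ : Set (Formula S)) : Set S.Func := {f | ∃ φ ∈ Φ, f ∈ φ.funcs}
def theoryPreds {S : Sig} (Φ : Set (Formula S)) : Set S.Pred := {q | ∃ φ ∈ Φ, q ∈ φ.preds}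

/-- The ambient signature is exactly the union of the signatures of `Φ` and `P`. -/
def CoverSig {S : Sig} (Φ : Set (Formula S)) (P : Program S) : Prop :=
  (∀ f : S.Func, f ∈ theoryFuncs Φ ∪ progFuncs P) ∧
  (∀ q : S.Pred, q ∈ theoryPreds Φ ∪ progPreds P)

def exClosure {S : Sig} (ys : List ℕ) (φ : Formula S) : Formula S := ys.foldr Formula.ex φ

/-- A Horn sentence `(∀)(b₁ ∧ … ∧ b_n ⊃ h)` with atomic `b_i`, `h`
(the consequent `h` may be absent). -/
def isHornSentence {S : Sig} (φ : Formula S) : Prop :=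
  ∃ (vs : List ℕ) (bs : List (Formula S)),
    (∀ b ∈ bs, b.isAtomic) ∧
    ((∃ h : Formula S, h.isAtomic ∧ φ = uclosure vs (impOf bs h)) ∨
     (∃ b rest, bs = b :: rest ∧ φ = uclosure vs (Formula.not (andAll b rest))))

def HornTheory {S : Sig} (Φ : Set (Formula S)) : Prop :=
  FOTheory Φ ∧ ∀ φ ∈ Φ, isHornSentence φ

/-- A generalized Horn sentence `(∀)(b₁ ∧ … ∧ b_n ⊃ ∃ȳ.h)` with atomic `b_i`, `h`,
the variables `ȳ` occurring only in `h` (the consequent may be absent). -/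
def isGHornSentence {S : Sig} (φ : Formula S) : Prop :=
  ∃ (vs : List ℕ) (bs : List (Formula S)),
    (∀ b ∈ bs, b.isAtomic) ∧
    ((∃ (ys : List ℕ) (h : Formula S), h.isAtomic ∧
        (∀ y ∈ ys, ∀ b ∈ bs, ¬ b.freeIn y) ∧
        φ = uclosure vs (impOf bs (exClosure ys h))) ∨
     (∃ b rest, bs = b :: rest ∧ φ = uclosure vs (Formula.not (andAll b rest))))

def GHornTheory {S : Sig} (Φ : Set (Formula S)) : Prop :=
  FOTheory Φ ∧ ∀ φ ∈ Φ, isGHornSentence φ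

def PropTheory {S : Sig} (Φ : Set (Formula S)) : Prop :=
  FOTheory Φ ∧ ∀ φ ∈ Φ, φ.isPropositional

/-!
Let `T` be a stable expansion of `Ψ`. Relative to the fixed belief set `T`, a theory whose modal
operators only govern atoms is a first-order theory; if `Φ` and `Ψ` entail the same closed atoms
relative to `T`, then iterating on the modal depth produces a stable expansion of `Φ` with the
objective consequences that `Φ` has relative to `T`. So if moreover `Ψ` entails `Φ` relative to
`T`, every objective autoepistemic consequence of `Φ` lies in `T`.

To compare closed atoms, start from a model `w` of `Φ`, keep only its named individuals, and declare
an atom true when it is both true and believed. Once every named rule instance with a true and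
believed body has a true and believed head in `w`, the result is a model of all the embeddings and
of the introspection axioms simultaneously, and it satisfies no new closed atom. For disjunctive
programs belief in the head comes from the introspection axioms or from the embedding `τ_EH`. For
a normal program it is automatic: the body is made of modal facts and believed atoms, hence holds
in every model of `Ψ`, so the unique head atom does too and belongs to `T`.
-/

section Development

variable {S : Sig} {X : Sem} {P : Program S} {w v : Interp S} {Γ Δ Φ Ψ T : Set (Formula S)}
  {B C : ℕ → w.U} {β σ : ℕ → Option (Term S)}

/-! ### Names and name substitutions -/

theorem Term.isGround_iff_forall_not_hasVar (t : Term S) : t.isGround ↔ ∀ x, ¬ t.hasVar x := by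
  induction t with
  | var y => simp [Term.isGround, Term.hasVar]
  | func f ts ih =>
    simp only [Term.isGround, Term.hasVar, ih, not_exists]
    exact forall_comm

theorem Term.isGround.isNameOf {F : Set S.Func} (hF : ∀ f, f ∈ F) {t : Term S} (h : t.isGround) :
    t.isNameOf F := by
  induction t with
  | var y => exact h.elim
  | func f ts ih => exact ⟨hF f, fun i => ih i (h i)⟩

theorem Term.isGround.subst_eq {t : Term S} (h : t.isGround) (β : ℕ → Option (Term S)) :
    t.subst β = t := by
  induction t with
  | var y => exact h.elim
  | func f ts ih => exact congrArg (Term.func f) (funext fun i => ih i (h i))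

theorem Term.isGround.eval_eq {t : Term S} (h : t.isGround) (B C : ℕ → w.U) :
    t.eval w B = t.eval w C := by
  induction t with
  | var y => exact h.elim
  | func f ts ih => exact congrArg (w.interpF f) (funext fun i => ih i (h i))

theorem Term.isGround.eval_eq_evalG {t : Term S} (h : t.isGround) (B : ℕ → w.U) :
    t.eval w B = t.evalG w :=
  h.eval_eq B _

theorem Term.subst_eq_of_extends (hσβ : ∀ x t, σ x = some t → β x = some t) {t : Term S}
    (h : (t.subst σ).isGround) : t.subst β = t.subst σ := by
  induction t with
  | var y =>
    cases hy : σ y with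
    | none => simp [Term.subst, hy, Term.isGround] at h
    | some s => simp [Term.subst, hy, hσβ y s hy]
  | func f ts ih => exact congrArg (Term.func f) (funext fun i => ih i (h i))

theorem Term.eval_subst (hβ : Assoc w B β) (t : Term S) : (t.subst β).eval w B = t.eval w B := by
  induction t with
  | var y =>
    cases hy : β y with
    | none => simp [Term.subst, hy]
    | some s =>
      obtain ⟨hs, heval⟩ := (hβ y).2 s hy
      simpa [Term.subst, hy, Term.eval] using (hs.eval_eq_evalG B).trans heval
  | func f ts ih => exact congrArg (w.interpF f) (funext ih)

theorem Term.evalG_subst (hβ : Assoc w B β) {t : Term S} (h : (t.subst β).isGround) :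
    (t.subst β).evalG w = t.eval w B := by
  rw [← h.eval_eq_evalG B, Term.eval_subst hβ]

theorem Term.isGround_subst_iff (hβ : Assoc w B β) (t : Term S) :
    (t.subst β).isGround ↔ ∀ x, t.hasVar x → IsNamed w (B x) := by
  induction t with
  | var y =>
    simp only [Term.subst, Term.hasVar, forall_eq']
    cases hy : β y with
    | none =>
      have hnot : ¬ IsNamed w (B y) := fun h => by simpa [hy] using (hβ y).1 h
      simp [Term.isGround, hnot]
    | some s =>
      have hs := (hβ y).2 s hy
      exact iff_of_true hs.1 ⟨s, hs⟩
  | func f ts ih =>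
    simp only [Term.subst, Term.hasVar, Term.isGround, ih, forall_exists_index]
    exact forall_comm

theorem exists_assoc (w : Interp S) (B : ℕ → w.U) : ∃ β, Assoc w B β := by
  classical
  refine ⟨fun x => if h : IsNamed w (B x) then some h.choose else none, fun x => ?_⟩
  by_cases h : IsNamed w (B x)
  · simpa [h] using h.choose_spec
  · simp [h]

theorem exists_assoc_extending (w : Interp S) (hσ : ∀ x t, σ x = some t → t.isGround) :
    ∃ (B : ℕ → w.U) (β : ℕ → Option (Term S)),
      Assoc w B β ∧ ∀ x t, σ x = some t → β x = some t := by
  let B : ℕ → w.U := fun x => ((σ x).map (Term.evalG w)).getD w.dflt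
  obtain ⟨τ, hτ⟩ := exists_assoc w B
  refine ⟨B, fun x => (σ x).or (τ x), fun x => ?_, fun x t hx => by simp [hx]⟩
  cases hx : σ x with
  | none => simpa only [hx, Option.none_or] using hτ x
  | some s => simpa [B, hx] using hσ x s hx

/-! ### Closed atoms -/

theorem Formula.closed_atom_iff (p : S.Pred) (ts : Fin (S.arP p) → Term S) :
    (Formula.atom p ts).closed ↔ ∀ i, (ts i).isGround := by
  simp only [Formula.closed, Formula.freeIn, Term.isGround_iff_forall_not_hasVar, not_exists]
  exact forall_comm

theorem Formula.closed_eq_iff (t s : Term S) :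
    (Formula.eq t s).closed ↔ t.isGround ∧ s.isGround := by
  simp only [Formula.closed, Formula.freeIn, Term.isGround_iff_forall_not_hasVar, not_or,
    forall_and]

theorem Formula.isAtomic.subst {α : Formula S} (h : α.isAtomic) (β : ℕ → Option (Term S)) :
    (α.subst β).isAtomic := by
  cases α <;> trivial

theorem Formula.isAtomic.isObjective {α : Formula S} (h : α.isAtomic) : α.isObjective := by
  cases α <;> trivial

theorem PAtom.isAtomic_toFormula (a : PAtom S) : a.toFormula.isAtomic := trivial

theorem PAtom.closed_toFormula_subst_iff (hβ : Assoc w B β) (a : PAtom S) :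
    (a.toFormula.subst β).closed ↔ ∀ x, a.hasVar x → IsNamed w (B x) := by
  simp only [PAtom.toFormula, Formula.subst, Formula.closed_atom_iff, Term.isGround_subst_iff hβ,
    PAtom.hasVar, forall_exists_index]
  exact forall_comm

theorem PAtom.toFormula_subst_eq_of_extends (hσβ : ∀ x t, σ x = some t → β x = some t)
    {a : PAtom S} (h : (a.toFormula.subst σ).closed) :
    a.toFormula.subst β = a.toFormula.subst σ :=
  congrArg (Formula.atom a.p) <| funext fun i =>
    Term.subst_eq_of_extends hσβ ((Formula.closed_atom_iff _ _).1 h i)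

theorem sat_atom_congr (p : S.Pred) {ts : Fin (S.arP p) → Term S}
    {ss : Fin (S.arP p) → Term S} (h : ∀ i, (ts i).eval w B = (ss i).eval w C) :
    Sat X w Γ (.atom p ts) B ↔ Sat X w Γ (.atom p ss) C :=
  iff_of_eq (congrArg (w.interpP p) (funext h))

theorem sat_toFormula_subst_iff (hβ : Assoc w B β) (a : PAtom S) :
    Sat X w Γ (a.toFormula.subst β) B ↔ Sat X w Γ a.toFormula B :=
  sat_atom_congr a.p fun i => Term.eval_subst hβ (a.args i)

/-! ### Satisfaction of connectives -/

theorem sat_not (φ : Formula S) : Sat X w Γ φ.not B ↔ ¬ Sat X w Γ φ B := Iff.rfl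

theorem sat_and (φ ψ : Formula S) : Sat X w Γ (φ.and ψ) B ↔ Sat X w Γ φ B ∧ Sat X w Γ ψ B :=
  Iff.rfl

theorem sat_imp (φ ψ : Formula S) :
    Sat X w Γ (φ.imp ψ) B ↔ (Sat X w Γ φ B → Sat X w Γ ψ B) := by
  simp only [Formula.imp, sat_not, sat_and, not_and, not_not]

theorem sat_or (φ ψ : Formula S) :
    Sat X w Γ (φ.or ψ) B ↔ Sat X w Γ φ B ∨ Sat X w Γ ψ B := by
  simp only [Formula.or, sat_not, sat_and, not_and_or, not_not]

theorem sat_all (x : ℕ) (φ : Formula S) :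
    Sat X w Γ (φ.all x) B ↔ ∀ u, Sat X w Γ φ (Function.update B x u) := by
  simp only [Formula.all, Sat, not_exists, not_not]

theorem sat_andAll_iff (φ : Formula S) (l : List (Formula S)) :
    Sat X w Γ (andAll φ l) B ↔ ∀ ψ ∈ φ :: l, Sat X w Γ ψ B := by
  induction l generalizing φ with
  | nil => simp [andAll]
  | cons ψ l ih => simp [andAll, ih, sat_and, and_assoc]

theorem sat_orAll_iff (φ : Formula S) (l : List (Formula S)) :
    Sat X w Γ (orAll φ l) B ↔ ∃ ψ ∈ φ :: l, Sat X w Γ ψ B := by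
  induction l generalizing φ with
  | nil => simp [orAll]
  | cons ψ l ih => simp [orAll, ih, sat_or, or_assoc]

theorem sat_impOf_iff (l : List (Formula S)) (φ : Formula S) :
    Sat X w Γ (impOf l φ) B ↔ ((∀ ψ ∈ l, Sat X w Γ ψ B) → Sat X w Γ φ B) := by
  cases l with
  | nil => simp [impOf]
  | cons ψ l => rw [impOf, sat_imp, sat_andAll_iff]

theorem sat_disjOf_iff {l : List (Formula S)} (hl : l ≠ []) :
    Sat X w Γ (disjOf l) B ↔ ∃ ψ ∈ l, Sat X w Γ ψ B := by
  cases l with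
  | nil => exact absurd rfl hl
  | cons ψ l => exact sat_orAll_iff ψ l

theorem modelsF_uclosure_iff (vs : List ℕ) (φ : Formula S) :
    ModelsF X w Γ (uclosure vs φ) ↔ ModelsF X w Γ φ := by
  induction vs with
  | nil => rfl
  | cons x vs ih =>
    rw [← ih]
    change (∀ B, Sat X w Γ ((uclosure vs φ).all x) B) ↔ _
    simp only [sat_all]
    refine ⟨fun h B => ?_, fun h B u => h _⟩
    simpa using h B (B x)

theorem modelsT_union_iff : ModelsT X w Γ (Φ ∪ Ψ) ↔ ModelsT X w Γ Φ ∧ ModelsT X w Γ Ψ := by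
  simp only [ModelsT, Set.mem_union, or_imp, forall_and]

theorem exists_assoc_mem_of_sat_box {φ : Formula S} (h : Sat X w Γ φ.box B) :
    ∃ β, Assoc w B β ∧ (φ.subst β).closed ∧ φ.subst β ∈ Γ := by
  cases X with
  | any => exact h
  | all =>
    obtain ⟨β, hβ⟩ := exists_assoc w B
    exact ⟨β, hβ, h β hβ⟩

theorem mem_of_sat_box {φ : Formula S} (hφ : ∀ β, φ.subst β = φ) (h : Sat X w Γ φ.box B) :
    φ ∈ Γ := by
  obtain ⟨β, -, -, hmem⟩ := exists_assoc_mem_of_sat_box h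
  rwa [hφ] at hmem

theorem isNamed_of_sat_box {a : PAtom S} (h : Sat X w Γ a.toFormula.box B) {x : ℕ}
    (hx : a.hasVar x) : IsNamed w (B x) := by
  obtain ⟨β, hβ, hclosed, -⟩ := exists_assoc_mem_of_sat_box h
  exact (a.closed_toFormula_subst_iff hβ).1 hclosed x hx

/-! ### Satisfaction of embedded rules -/

theorem modelsT_ruleEmb_iff {emb : Rule S → Formula S} {body head : Rule S → List (Formula S)}
    (hemb : ∀ r, emb r = uclosure r.vars (impOf (body r) (disjOf (head r))))
    (hhead : ∀ r ∈ P, head r ≠ []) :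
    ModelsT X w Γ (ruleEmb emb P) ↔ ∀ r ∈ P, ∀ B : ℕ → w.U,
      (∀ φ ∈ body r, Sat X w Γ φ B) → ∃ ψ ∈ head r, Sat X w Γ ψ B := by
  have hrule : ∀ r ∈ P, ModelsF X w Γ (emb r) ↔ ∀ B : ℕ → w.U,
      (∀ φ ∈ body r, Sat X w Γ φ B) → ∃ ψ ∈ head r, Sat X w Γ ψ B := fun r hr => by
    rw [hemb, modelsF_uclosure_iff]
    simp only [ModelsF, sat_impOf_iff, sat_disjOf_iff (hhead r hr)]
  refine ⟨fun h r hr => (hrule r hr).1 (h _ ⟨r, hr, rfl⟩), ?_⟩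
  rintro h φ ⟨r, hr, rfl⟩
  exact (hrule r hr).2 (h r hr)

theorem modelsT_embHP_iff (hP : ∀ r ∈ P, r.head ≠ []) :
    ModelsT X w Γ (ruleEmb embHP P) ↔ ∀ r ∈ P, ∀ B : ℕ → w.U,
      (∀ φ ∈ bodyHP r, Sat X w Γ φ B) → ∃ h ∈ r.head, Sat X w Γ h.toFormula B := by
  simp [modelsT_ruleEmb_iff (fun r => embHP.eq_1 r) (by simpa using hP)]

theorem modelsT_embEB_iff (hP : ∀ r ∈ P, r.head ≠ []) :
    ModelsT X w Γ (ruleEmb embEB P) ↔ ∀ r ∈ P, ∀ B : ℕ → w.U,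
      (∀ φ ∈ bodyE r, Sat X w Γ φ B) → ∃ h ∈ r.head, Sat X w Γ h.toFormula B := by
  simp [modelsT_ruleEmb_iff (fun r => embEB.eq_1 r) (by simpa using hP)]

theorem modelsT_embEH_iff (hP : ∀ r ∈ P, r.head ≠ []) :
    ModelsT X w Γ (ruleEmb embEH P) ↔ ∀ r ∈ P, ∀ B : ℕ → w.U,
      (∀ φ ∈ bodyE r, Sat X w Γ φ B) →
        ∃ h ∈ r.head, Sat X w Γ (h.toFormula.and h.toFormula.box) B := by
  simp [modelsT_ruleEmb_iff (fun r => embEH.eq_1 r) (by simpa using hP)]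

theorem sat_bodyHP_iff (r : Rule S) : (∀ φ ∈ bodyHP r, Sat X w Γ φ B) ↔
    (∀ b ∈ r.pos, Sat X w Γ b.toFormula B) ∧ ∀ c ∈ r.neg, ¬ Sat X w Γ c.toFormula.box B := by
  simp only [bodyHP, List.forall_mem_append, List.forall_mem_map, sat_not]

theorem sat_bodyE_iff (r : Rule S) : (∀ φ ∈ bodyE r, Sat X w Γ φ B) ↔
    (∀ b ∈ r.pos, Sat X w Γ b.toFormula B ∧ Sat X w Γ b.toFormula.box B) ∧
      ∀ c ∈ r.neg, ¬ Sat X w Γ c.toFormula.box B := by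
  simp only [bodyE, List.forall_mem_append, List.forall_mem_map, sat_not, sat_and]

theorem sat_bodyHP_of_sat_bodyE {r : Rule S} (h : ∀ φ ∈ bodyE r, Sat X w Γ φ B) :
    ∀ φ ∈ bodyHP r, Sat X w Γ φ B := by
  rw [sat_bodyE_iff] at h
  exact (sat_bodyHP_iff r).2 ⟨fun b hb => (h.1 b hb).1, h.2⟩

/-- The entailment `Φ ⊨ˣ_Γ Ψ` between theories, relative to the belief set `Γ`. -/
def EntailsTheory (X : Sem) (Φ Γ Ψ : Set (Formula S)) : Prop :=
  ∀ w : Interp S, ModelsT X w Γ Φ → ModelsT X w Γ Ψ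

theorem EntailsTheory.of_subset (h : Ψ ⊆ Φ) : EntailsTheory X Φ Γ Ψ :=
  fun _ hw φ hφ => hw φ (h hφ)

theorem EntailsTheory.trans (h₁ : EntailsTheory X Φ Γ Ψ) (h₂ : EntailsTheory X Ψ Γ Δ) :
    EntailsTheory X Φ Γ Δ :=
  fun w hw => h₂ w (h₁ w hw)

theorem EntailsTheory.union (h₁ : EntailsTheory X Φ Γ Ψ) (h₂ : EntailsTheory X Φ Γ Δ) :
    EntailsTheory X Φ Γ (Ψ ∪ Δ) :=
  fun w hw => modelsT_union_iff.2 ⟨h₁ w hw, h₂ w hw⟩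

theorem entailsTheory_embHP_embEB (hP : ∀ r ∈ P, r.head ≠ []) :
    EntailsTheory X (ruleEmb embHP P) Γ (ruleEmb embEB P) := by
  intro w hw
  rw [modelsT_embHP_iff hP] at hw
  exact (modelsT_embEB_iff hP).2 fun r hr B hbody => hw r hr B (sat_bodyHP_of_sat_bodyE hbody)

theorem entailsTheory_embEH_embEB (hP : ∀ r ∈ P, r.head ≠ []) :
    EntailsTheory X (ruleEmb embEH P) Γ (ruleEmb embEB P) := by
  intro w hw
  rw [modelsT_embEH_iff hP] at hw
  refine (modelsT_embEB_iff hP).2 fun r hr B hbody => ?_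
  obtain ⟨h, hh, htrue, -⟩ := hw r hr B hbody
  exact ⟨h, hh, htrue⟩

theorem entailsTheory_tauHP_tauEB (hP : ∀ r ∈ P, r.head ≠ []) :
    EntailsTheory X (tauHP P) Γ (tauEB P) :=
  .union (.trans (.of_subset Set.subset_union_left) (entailsTheory_embHP_embEB hP))
    (.of_subset Set.subset_union_right)

theorem entailsTheory_tauEH_tauEB (hP : ∀ r ∈ P, r.head ≠ []) :
    EntailsTheory X (tauEH P) Γ (tauEB P) :=
  .union (.trans (.of_subset Set.subset_union_left) (entailsTheory_embEH_embEB hP))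
    (.of_subset Set.subset_union_right)

theorem tauHP_subset_tauHPv : tauHP P ⊆ tauHPv P :=
  Set.union_subset_union_left _ Set.subset_union_left

theorem tauEB_subset_tauEBv : tauEB P ⊆ tauEBv P :=
  Set.union_subset_union_left _ Set.subset_union_left

theorem entailsTheory_tauHPv_tauEBv (hP : ∀ r ∈ P, r.head ≠ []) :
    EntailsTheory X (tauHPv P) Γ (tauEBv P) := by
  have hEB : EntailsTheory X (tauHPv P) Γ (tauEB P) :=
    .trans (.of_subset tauHP_subset_tauHPv) (entailsTheory_tauHP_tauEB hP)
  have hPIA : EntailsTheory X (tauHPv P) Γ (PIAax P) :=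
    .of_subset (Set.subset_union_right.trans Set.subset_union_left)
  exact ((hEB.trans (.of_subset Set.subset_union_left)).union hPIA).union
    (.of_subset Set.subset_union_right)

theorem entailsTheory_tauHPv_union_tauEHv_tauEBv (hP : ∀ r ∈ P, r.head ≠ []) :
    EntailsTheory X (tauHPv P ∪ tauEHv P) Γ (tauEBv P) :=
  .trans (.of_subset Set.subset_union_left) (entailsTheory_tauHPv_tauEBv hP)

/-! ### Theories in which belief is only about atoms -/

theorem boxAtomic_andAll {φ : Formula S} {l : List (Formula S)} (h : ∀ ψ ∈ φ :: l, ψ.boxAtomic) :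
    (andAll φ l).boxAtomic := by
  induction l generalizing φ with
  | nil => exact h φ List.mem_cons_self
  | cons ψ l ih =>
    simp only [List.forall_mem_cons] at h ih
    exact ih ⟨⟨h.1, h.2.1⟩, h.2.2⟩

theorem boxAtomic_orAll {φ : Formula S} {l : List (Formula S)} (h : ∀ ψ ∈ φ :: l, ψ.boxAtomic) :
    (orAll φ l).boxAtomic := by
  induction l generalizing φ with
  | nil => exact h φ List.mem_cons_self
  | cons ψ l ih =>
    simp only [List.forall_mem_cons] at h ih
    exact ih ⟨⟨h.1, h.2.1⟩, h.2.2⟩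

theorem boxAtomic_rule (vs : List ℕ) {body head : List (Formula S)}
    (hbody : ∀ φ ∈ body, φ.boxAtomic) (hhead : ∀ ψ ∈ head, ψ.boxAtomic) :
    (uclosure vs (impOf body (disjOf head))).boxAtomic := by
  have hdisj : (disjOf head).boxAtomic := by
    cases head with
    | nil => trivial
    | cons ψ l => exact boxAtomic_orAll hhead
  have himp : (impOf body (disjOf head)).boxAtomic := by
    cases body with
    | nil => exact hdisj
    | cons φ l => exact ⟨boxAtomic_andAll hbody, hdisj⟩
  induction vs with
  | nil => exact himp
  | cons _ _ ih => exact ih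

theorem boxAtomic_of_mem_bodyHP {r : Rule S} : ∀ φ ∈ bodyHP r, φ.boxAtomic := by
  simp [bodyHP, or_imp, forall_and, PAtom.toFormula, Formula.boxAtomic, Formula.isAtomic]

theorem boxAtomic_of_mem_bodyE {r : Rule S} : ∀ φ ∈ bodyE r, φ.boxAtomic := by
  simp [bodyE, or_imp, forall_and, PAtom.toFormula, Formula.boxAtomic, Formula.isAtomic]

theorem boxAtomic_embHP (r : Rule S) : (embHP r).boxAtomic :=
  boxAtomic_rule _ boxAtomic_of_mem_bodyHP (by simp [PAtom.toFormula, Formula.boxAtomic])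

theorem boxAtomic_embEB (r : Rule S) : (embEB r).boxAtomic :=
  boxAtomic_rule _ boxAtomic_of_mem_bodyE (by simp [PAtom.toFormula, Formula.boxAtomic])

theorem boxAtomic_embEH (r : Rule S) : (embEH r).boxAtomic :=
  boxAtomic_rule _ boxAtomic_of_mem_bodyE
    (by simp [PAtom.toFormula, Formula.boxAtomic, Formula.isAtomic])

theorem boxAtomic_of_mem_ruleEmb_union {emb : Rule S → Formula S} (hemb : ∀ r, (emb r).boxAtomic) :
    ∀ φ ∈ ruleEmb emb P ∪ PIAax P ∪ UNAax P, φ.boxAtomic := by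
  rintro φ ((⟨r, -, rfl⟩ | ⟨a, -, -, rfl⟩) | ⟨t, s, -, -, -, rfl⟩)
  · exact hemb r
  · exact ⟨trivial, trivial⟩
  · exact ⟨trivial, trivial⟩

theorem boxAtomic_of_mem_tauHP : ∀ φ ∈ tauHP P, φ.boxAtomic := fun _ hφ =>
  boxAtomic_of_mem_ruleEmb_union boxAtomic_embHP _ (tauHP_subset_tauHPv hφ)

theorem boxAtomic_of_mem_tauEB : ∀ φ ∈ tauEB P, φ.boxAtomic := fun _ hφ =>
  boxAtomic_of_mem_ruleEmb_union boxAtomic_embEB _ (tauEB_subset_tauEBv hφ)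

theorem boxAtomic_of_mem_tauEHv : ∀ φ ∈ tauEHv P, φ.boxAtomic := fun _ hφ =>
  boxAtomic_of_mem_ruleEmb_union boxAtomic_embEH _
    (Set.union_subset_union_left _ Set.subset_union_left hφ)

/-! ### Stable expansions with prescribed closed atoms -/

/-- The nesting depth of the modal operator. -/
def Formula.modalDepth : Formula S → ℕ
  | .atom _ _ => 0
  | .eq _ _ => 0
  | .not φ => φ.modalDepth
  | .and φ ψ => max φ.modalDepth ψ.modalDepth
  | .ex _ φ => φ.modalDepth
  | .box φ => φ.modalDepth + 1

theorem Formula.modalDepth_subst (φ : Formula S) (β : ℕ → Option (Term S)) :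
    (φ.subst β).modalDepth = φ.modalDepth := by
  induction φ generalizing β with
  | atom | eq => rfl
  | not _ ih => exact ih β
  | and _ _ ihφ ihψ => exact congrArg₂ max (ihφ β) (ihψ β)
  | ex _ _ ih => exact ih _
  | box _ ih => exact congrArg (· + 1) (ih β)

theorem Formula.isObjective.modalDepth_eq_zero {φ : Formula S} (h : φ.isObjective) :
    φ.modalDepth = 0 := by
  induction φ with
  | atom | eq => rfl
  | not _ ih | ex _ _ ih => exact ih h
  | and _ _ ihφ ihψ => simp [Formula.modalDepth, ihφ h.1, ihψ h.2]
  | box _ => exact h.elim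

theorem sat_box_congr (φ : Formula S)
    (h : ∀ β, (φ.subst β).closed → (φ.subst β ∈ Γ ↔ φ.subst β ∈ Δ)) :
    Sat X w Γ φ.box B ↔ Sat X w Δ φ.box B := by
  cases X with
  | any => exact exists_congr fun β => and_congr_right fun _ => and_congr_right (h β)
  | all => exact forall_congr' fun β => imp_congr_right fun _ => and_congr_right (h β)

theorem sat_congr_of_modalDepth_le {n : ℕ} (hΓΔ : ∀ φ : Formula S, φ.modalDepth < n →
    (φ ∈ Γ ↔ φ ∈ Δ)) {φ : Formula S} (hφ : φ.modalDepth ≤ n) :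
    Sat X w Γ φ B ↔ Sat X w Δ φ B := by
  induction φ generalizing B with
  | atom | eq => rfl
  | not _ ih => exact not_congr (ih hφ)
  | and _ _ ihφ ihψ => exact and_congr (ihφ (le_of_max_le_left hφ)) (ihψ (le_of_max_le_right hφ))
  | ex _ _ ih => exact exists_congr fun _ => ih hφ
  | box φ =>
    exact sat_box_congr φ fun β _ => hΓΔ _ ((φ.modalDepth_subst β).trans_lt hφ)

theorem sat_congr_of_boxAtomic (hΓΔ : ∀ α : Formula S, α.isAtomic → α.closed →
    (α ∈ Γ ↔ α ∈ Δ)) {φ : Formula S} (hφ : φ.boxAtomic) :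
    Sat X w Γ φ B ↔ Sat X w Δ φ B := by
  induction φ generalizing B with
  | atom | eq => rfl
  | not _ ih => exact not_congr (ih hφ)
  | and _ _ ihφ ihψ => exact and_congr (ihφ hφ.1) (ihψ hφ.2)
  | ex _ _ ih => exact exists_congr fun _ => ih hφ
  | box φ => exact sat_box_congr φ fun β => hΓΔ _ (hφ.subst β)

/-- The stages of the construction of a stable expansion of `Φ`. The axioms `Φ` are always
evaluated relative to `Γ`; formulas of modal depth below `n` are settled from stage `n` on. -/
def beliefStage (X : Sem) (Φ Γ : Set (Formula S)) : ℕ → Set (Formula S)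
  | 0 => Γ
  | n + 1 => {φ | ∀ w : Interp S, ModelsT X w Γ Φ → ModelsF X w (beliefStage X Φ Γ n) φ}

/-- The limit of the sets `beliefStage X Φ Γ n`: each formula is judged at the first stage that
settles it. -/
def beliefLimit (X : Sem) (Φ Γ : Set (Formula S)) : Set (Formula S) :=
  {φ | φ ∈ beliefStage X Φ Γ (φ.modalDepth + 1)}

theorem mem_beliefStage_succ_iff {n : ℕ} {φ : Formula S} (h : φ.modalDepth < n) :
    φ ∈ beliefStage X Φ Γ (n + 1) ↔ φ ∈ beliefStage X Φ Γ n := by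
  induction n generalizing φ with
  | zero => exact absurd h (Nat.not_lt_zero _)
  | succ n ih =>
    exact forall_congr' fun w => imp_congr_right fun _ => forall_congr' fun B =>
      sat_congr_of_modalDepth_le (fun ψ hψ => ih hψ) (Nat.le_of_lt_succ h)

theorem mem_beliefLimit_iff {n : ℕ} {φ : Formula S} (h : φ.modalDepth < n) :
    φ ∈ beliefLimit X Φ Γ ↔ φ ∈ beliefStage X Φ Γ n := by
  induction n, h using Nat.le_induction with
  | base => rfl
  | succ n hn ih => rw [ih, mem_beliefStage_succ_iff hn]

theorem mem_beliefLimit_iff_entails {φ : Formula S} (h : φ.isObjective) :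
    φ ∈ beliefLimit X Φ Γ ↔ Entails X Φ Γ φ :=
  mem_beliefLimit_iff (n := 1) (by simp [h.modalDepth_eq_zero])

theorem stableExp_beliefLimit (hΦ : ∀ φ ∈ Φ, φ.boxAtomic)
    (hΓ : ∀ α : Formula S, α.isAtomic → α.closed → (α ∈ Γ ↔ Entails X Φ Γ α)) :
    StableExp X Φ (beliefLimit X Φ Γ) := by
  have hmodels (w : Interp S) : ModelsT X w Γ Φ ↔ ModelsT X w (beliefLimit X Φ Γ) Φ :=
    forall₂_congr fun φ hφ => forall_congr' fun B => sat_congr_of_boxAtomic (fun α hα hclosed =>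
      (hΓ α hα hclosed).trans (mem_beliefLimit_iff_entails hα.isObjective).symm) (hΦ φ hφ)
  ext φ
  exact forall_congr' fun w => imp_congr (hmodels w) <| forall_congr' fun B =>
    sat_congr_of_modalDepth_le (fun ψ hψ => (mem_beliefLimit_iff hψ).symm) le_rfl

theorem StableExp.mem_iff (hT : StableExp X Ψ T) (φ : Formula S) : φ ∈ T ↔ Entails X Ψ T φ :=
  Set.ext_iff.1 hT φ

theorem cnO_subset_of_entailsTheory (hΦ : ∀ φ ∈ Φ, φ.boxAtomic)
    (hΨΦ : ∀ T, StableExp X Ψ T → EntailsTheory X Ψ T Φ)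
    (hatoms : ∀ T, StableExp X Ψ T → ∀ α : Formula S, α.isAtomic → α.closed →
      Entails X Ψ T α → Entails X Φ T α) :
    CnO X Φ ⊆ CnO X Ψ := by
  rintro φ ⟨hφ, hobj⟩
  refine ⟨fun T hT => (hT.mem_iff φ).2 ?_, hobj⟩
  have hexp : StableExp X Φ (beliefLimit X Φ T) := stableExp_beliefLimit hΦ fun α hα hclosed =>
    (hT.mem_iff α).trans
      ⟨hatoms T hT α hα hclosed, fun h w hw => h w (hΨΦ T hT w hw)⟩
  have hentails : Entails X Φ T φ := (mem_beliefLimit_iff_entails hobj).1 (hφ _ hexp)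
  exact fun w hw => hentails w (hΨΦ T hT w hw)

/-! ### Belief in ground atoms -/

/-- `T` contains every identity between names that holds in `w`. Under this condition belief in an
atom does not depend on which names are chosen for its arguments. -/
def BelievesIdentities (w : Interp S) (T : Set (Formula S)) : Prop :=
  ∀ t s : Term S, t.isGround → s.isGround → t.evalG w = s.evalG w → Formula.eq t s ∈ T

theorem believesIdentities_of_modelsT_UNAax (hf : fullSig P) (hT : StableExp X Ψ T)
    (hw : ModelsT X w T (UNAax P)) : BelievesIdentities w T := by
  intro t s ht hs heq
  by_cases hts : t = s
  · subst hts
    exact (hT.mem_iff _).2 fun _ _ _ => rfl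
  · have hUNA := hw _ ⟨t, s, ht.isNameOf hf.1, hs.isNameOf hf.1, hts, rfl⟩ fun _ => w.dflt
    simp only [sat_imp, sat_not, not_imp_not] at hUNA
    exact mem_of_sat_box (fun β => congrArg₂ Formula.eq (ht.subst_eq β) (hs.subst_eq β))
      (hUNA heq)

theorem BelievesIdentities.atom_mem (hT : StableExp X Ψ T) (hw : BelievesIdentities w T)
    {p : S.Pred} {ts ss : Fin (S.arP p) → Term S} (hts : ∀ i, (ts i).isGround)
    (hss : ∀ i, (ss i).isGround) (heq : ∀ i, (ts i).evalG w = (ss i).evalG w)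
    (hmem : Formula.atom p ts ∈ T) : Formula.atom p ss ∈ T := by
  refine (hT.mem_iff _).2 fun v hv B => ?_
  have hidentity (i) : (ts i).eval v B = (ss i).eval v B :=
    (hT.mem_iff _).1 (hw _ _ (hts i) (hss i) (heq i)) v hv B
  exact (sat_atom_congr p hidentity).1 ((hT.mem_iff _).1 hmem v hv B)

theorem BelievesIdentities.toFormula_subst_mem (hT : StableExp X Ψ T)
    (hw : BelievesIdentities w T) (hσ : Assoc w B σ) (hβ : Assoc w B β) {a : PAtom S}
    (hclosed : (a.toFormula.subst σ).closed) (hmem : a.toFormula.subst σ ∈ T) :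
    (a.toFormula.subst β).closed ∧ a.toFormula.subst β ∈ T := by
  have hclosed' : (a.toFormula.subst β).closed := by
    rwa [a.closed_toFormula_subst_iff hβ, ← a.closed_toFormula_subst_iff hσ]
  have hts := (Formula.closed_atom_iff _ _).1 hclosed
  have hss := (Formula.closed_atom_iff _ _).1 hclosed'
  refine ⟨hclosed', hw.atom_mem hT hts hss (fun i => ?_) hmem⟩
  rw [Term.evalG_subst hσ (hts i), Term.evalG_subst hβ (hss i)]

theorem sat_box_toFormula_iff (hT : StableExp X Ψ T) (hw : BelievesIdentities w T)
    (hβ : Assoc w B β) (a : PAtom S) : Sat X w T a.toFormula.box B ↔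
      (a.toFormula.subst β).closed ∧ a.toFormula.subst β ∈ T := by
  refine ⟨fun h => ?_, fun ⟨hclosed, hmem⟩ => ?_⟩
  · obtain ⟨σ, hσ, hclosed, hmem⟩ := exists_assoc_mem_of_sat_box h
    exact hw.toFormula_subst_mem hT hσ hβ hclosed hmem
  · cases X with
    | any => exact ⟨β, hβ, hclosed, hmem⟩
    | all => exact fun _ hσ => hw.toFormula_subst_mem hT hβ hσ hclosed hmem

theorem sat_congr_of_closed {α : Formula S} (hα : α.isAtomic) (hclosed : α.closed) :
    Sat X w Γ α B ↔ Sat X w Γ α C := by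
  cases α with
  | atom p ts =>
    rw [Formula.closed_atom_iff] at hclosed
    exact sat_atom_congr p fun i => (hclosed i).eval_eq B C
  | eq t s =>
    obtain ⟨ht, hs⟩ := (Formula.closed_eq_iff t s).1 hclosed
    simp only [Sat, ht.eval_eq B C, hs.eval_eq B C]
  | not | and | ex | box => exact hα.elim

theorem atom_mem_of_modelsT_PIAax (hf : fullSig P) (hw : ModelsT X w T (PIAax P)) {p : S.Pred}
    {ts : Fin (S.arP p) → Term S} (hts : ∀ i, (ts i).isGround)
    (htrue : Sat X w T (.atom p ts) B) : Formula.atom p ts ∈ T := by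
  have hPIA := hw _ ⟨⟨p, ts⟩, hf.2 p, fun i => (hts i).isNameOf hf.1, rfl⟩ B
  exact mem_of_sat_box (fun β => congrArg (Formula.atom p) (funext fun i => (hts i).subst_eq β))
    ((sat_imp _ _).1 hPIA htrue)

/-! ### Belief in rule heads -/

/-- Every instance of a rule of `P` by named individuals whose body is true and believed has a head
atom that is true and believed. -/
def HeadsBelieved (X : Sem) (P : Program S) (w : Interp S) (T : Set (Formula S)) : Prop :=
  ∀ r ∈ P, ∀ B : ℕ → w.U, (∀ x, r.hasVar x → IsNamed w (B x)) →
    (∀ φ ∈ bodyE r, Sat X w T φ B) →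
      ∃ h ∈ r.head, Sat X w T (h.toFormula.and h.toFormula.box) B

theorem headsBelieved_of_modelsT_tauEHv (hP : ∀ r ∈ P, r.head ≠ [])
    (hw : ModelsT X w T (tauEHv P)) : HeadsBelieved X P w T :=
  fun r hr B _ => (modelsT_embEH_iff hP).1 (modelsT_union_iff.1 hw).1 r hr B

theorem modelsT_embEH_of_headsBelieved (hP : ∀ r ∈ P, r.head ≠ []) (hs : progSafe P)
    (hw : HeadsBelieved X P w T) : ModelsT X w T (ruleEmb embEH P) := by
  refine (modelsT_embEH_iff hP).2 fun r hr B hbody => hw r hr B (fun x hx => ?_) hbody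
  obtain ⟨b, hb, hbx⟩ := hs r hr x hx
  exact isNamed_of_sat_box (((sat_bodyE_iff r).1 hbody).1 b hb).2 hbx

theorem headsBelieved_of_modelsT_tauEBv (hP : ∀ r ∈ P, r.head ≠ []) (hf : fullSig P)
    (hT : StableExp X Ψ T) (hw : ModelsT X w T (tauEBv P)) : HeadsBelieved X P w T := by
  obtain ⟨hrules, hUNA⟩ := modelsT_union_iff.1 hw
  obtain ⟨hEB, hPIA⟩ := modelsT_union_iff.1 hrules
  intro r hr B hnamed hbody
  obtain ⟨h, hh, htrue⟩ := (modelsT_embEB_iff hP).1 hEB r hr B hbody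
  obtain ⟨β, hβ⟩ := exists_assoc w B
  have hclosed : (h.toFormula.subst β).closed := (h.closed_toFormula_subst_iff hβ).2
    fun x hx => hnamed x ⟨h, by simp [Rule.atoms, hh], hx⟩
  have hmem : h.toFormula.subst β ∈ T :=
    atom_mem_of_modelsT_PIAax hf hPIA ((Formula.closed_atom_iff _ _).1 hclosed)
      ((sat_toFormula_subst_iff hβ h).2 htrue)
  exact ⟨h, hh, htrue, (sat_box_toFormula_iff hT
    (believesIdentities_of_modelsT_UNAax hf hT hUNA) hβ h).2 ⟨hclosed, hmem⟩⟩

theorem sat_bodyE_transfer {C : ℕ → v.U} {r : Rule S} (hT : StableExp X Ψ T)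
    (hw : BelievesIdentities w T) (hv : BelievesIdentities v T) (hvΨ : ModelsT X v T Ψ)
    (hσ : Assoc w B σ) (hβ : Assoc v C β)
    (hβσ : ∀ a ∈ r.atoms, a.toFormula.subst β = a.toFormula.subst σ)
    (hbody : ∀ φ ∈ bodyE r, Sat X w T φ B) : ∀ φ ∈ bodyE r, Sat X v T φ C := by
  have hbox : ∀ a ∈ r.atoms, Sat X v T a.toFormula.box C ↔ Sat X w T a.toFormula.box B :=
    fun a ha => by
      rw [sat_box_toFormula_iff hT hv hβ, sat_box_toFormula_iff hT hw hσ, hβσ a ha]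
  rw [sat_bodyE_iff] at hbody ⊢
  refine ⟨fun b hb => ?_, fun c hc => ?_⟩
  · have hbelieved := (hbox b (by simp [Rule.atoms, hb])).2 (hbody.1 b hb).2
    have hmem := ((sat_box_toFormula_iff hT hv hβ b).1 hbelieved).2
    exact ⟨(sat_toFormula_subst_iff hβ b).1 ((hT.mem_iff _).1 hmem v hvΨ C), hbelieved⟩
  · rw [hbox c (by simp [Rule.atoms, hc])]
    exact hbody.2 c hc

theorem headsBelieved_of_progNormal (hn : progNormal P) (hP : ∀ r ∈ P, r.head ≠ [])
    (hf : fullSig P) (hT : StableExp X Ψ T) (hΨ : EntailsTheory X Ψ T (tauEB P))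
    (hw : ModelsT X w T (tauEB P)) : HeadsBelieved X P w T := by
  have hidentities {v : Interp S} (hv : ModelsT X v T (tauEB P)) : BelievesIdentities v T :=
    believesIdentities_of_modelsT_UNAax hf hT (modelsT_union_iff.1 hv).2
  have hhead {v : Interp S} (hv : ModelsT X v T (tauEB P)) :=
    (modelsT_embEB_iff hP).1 (modelsT_union_iff.1 hv).1
  intro r hr B hnamed hbody
  obtain ⟨h, hrh⟩ := List.length_eq_one_iff.1 (hn r hr)
  obtain ⟨σ, hσ⟩ := exists_assoc w B
  have hclosed : ∀ a ∈ r.atoms, (a.toFormula.subst σ).closed := fun a ha =>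
    (a.closed_toFormula_subst_iff hσ).2 fun x hx => hnamed x ⟨a, ha, hx⟩
  have hhr : h ∈ r.atoms := by simp [Rule.atoms, hrh]
  have hmem : h.toFormula.subst σ ∈ T := (hT.mem_iff _).2 fun v hvΨ C' => by
    have hv := hΨ v hvΨ
    obtain ⟨C, β, hβ, hσβ⟩ := exists_assoc_extending v fun x t hx => ((hσ x).2 t hx).1
    have hβσ : ∀ a ∈ r.atoms, a.toFormula.subst β = a.toFormula.subst σ := fun a ha =>
      a.toFormula_subst_eq_of_extends hσβ (hclosed a ha)
    have htrue : Sat X v T h.toFormula C := by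
      simpa [hrh] using hhead hv r hr C
        (sat_bodyE_transfer hT (hidentities hw) (hidentities hv) hvΨ hσ hβ hβσ hbody)
    rw [← sat_toFormula_subst_iff hβ, hβσ h hhr] at htrue
    exact (sat_congr_of_closed (h.isAtomic_toFormula.subst σ) (hclosed h hhr)).1 htrue
  refine ⟨h, by simp [hrh], by simpa [hrh] using hhead hw r hr B hbody, ?_⟩
  exact (sat_box_toFormula_iff hT (hidentities hw) hσ h).2 ⟨hclosed h hhr, hmem⟩

/-! ### The named and believed part of an interpretation -/

theorem isNamed_interpF {f : S.Func} {ks : Fin (S.arF f) → w.U} (h : ∀ i, IsNamed w (ks i)) :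
    IsNamed w (w.interpF f ks) := by
  choose ts hts heval using h
  exact ⟨.func f ts, hts, congrArg (w.interpF f) (funext heval)⟩

/-- The restriction of `w` to its named individuals in which an atom holds only if it is moreover
believed. If `w` has no named individual, the whole universe is kept, since universes are
nonempty. -/
def Interp.believedPart (w : Interp S) (T : Set (Formula S)) : Interp S where
  U := {k : w.U // (∃ k', IsNamed w k') → IsNamed w k}
  nonempty := by
    by_cases h : ∃ k, IsNamed w k
    · exact h.elim fun k hk => ⟨⟨k, fun _ => hk⟩⟩
    · exact ⟨⟨w.dflt, fun h' => (h h').elim⟩⟩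
  interpF f ks := ⟨w.interpF f fun i => (ks i).1, fun h => isNamed_interpF fun i => (ks i).2 h⟩
  interpP p ks := w.interpP p (fun i => (ks i).1) ∧
    ∃ ts : Fin (S.arP p) → Term S, (∀ i, (ts i).isGround) ∧
      (∀ i, (ts i).evalG w = (ks i).1) ∧ Formula.atom p ts ∈ T

theorem val_eval_believedPart (D : ℕ → (w.believedPart T).U) (t : Term S) :
    (t.eval (w.believedPart T) D).1 = t.eval w fun x => (D x).1 := by
  induction t with
  | var y => rfl
  | func f ts ih => exact congrArg (w.interpF f) (funext ih)

theorem evalG_believedPart_eq_iff {t : Term S} (ht : t.isGround) (k : (w.believedPart T).U) :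
    t.evalG (w.believedPart T) = k ↔ t.evalG w = k.1 := by
  rw [← ht.eval_eq_evalG fun _ => (w.believedPart T).dflt.1, ← val_eval_believedPart]
  exact Subtype.ext_iff

theorem isNamed_believedPart_iff (k : (w.believedPart T).U) :
    IsNamed (w.believedPart T) k ↔ IsNamed w k.1 :=
  exists_congr fun _ => and_congr_right fun ht => evalG_believedPart_eq_iff ht k

theorem assoc_believedPart_iff (D : ℕ → (w.believedPart T).U) :
    Assoc (w.believedPart T) D β ↔ Assoc w (fun x => (D x).1) β :=
  forall_congr' fun x => and_congr (imp_congr_left (isNamed_believedPart_iff (D x))) <|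
    forall₂_congr fun _ _ => and_congr_right fun ht => evalG_believedPart_eq_iff ht (D x)

theorem sat_box_believedPart_iff (φ : Formula S) (D : ℕ → (w.believedPart T).U) :
    Sat X (w.believedPart T) Γ φ.box D ↔ Sat X w Γ φ.box fun x => (D x).1 := by
  cases X <;> simp only [Sat, assoc_believedPart_iff]

theorem sat_atom_believedPart_iff (p : S.Pred) (ts : Fin (S.arP p) → Term S)
    (D : ℕ → (w.believedPart T).U) : Sat X (w.believedPart T) Γ (.atom p ts) D ↔
      Sat X w Γ (.atom p ts) (fun x => (D x).1) ∧
        ∃ ss : Fin (S.arP p) → Term S, (∀ i, (ss i).isGround) ∧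
          (∀ i, (ss i).evalG w = (ts i).eval w fun x => (D x).1) ∧ Formula.atom p ss ∈ T := by
  simp only [Sat, ← val_eval_believedPart]
  rfl

theorem sat_eq_believedPart_iff (t s : Term S) (D : ℕ → (w.believedPart T).U) :
    Sat X (w.believedPart T) Γ (.eq t s) D ↔ Sat X w Γ (.eq t s) fun x => (D x).1 := by
  simp only [Sat, ← val_eval_believedPart]
  exact Subtype.ext_iff

theorem isNamed_of_hasVar (hf : fullSig P) (hg : goodSig P) {a : PAtom S} {x : ℕ}
    (hx : a.hasVar x) (k : (w.believedPart T).U) : IsNamed w k.1 := by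
  obtain ⟨i, -⟩ := hx
  obtain ⟨f, -, hf0⟩ := hg ⟨a.p, hf.2 a.p, i.pos⟩
  have : IsEmpty (Fin (S.arF f)) := by rw [hf0]; infer_instance
  exact k.2 ⟨_, isNamed_interpF (f := f) (ks := isEmptyElim) fun i => isEmptyElim i⟩

theorem sat_toFormula_believedPart_iff (hf : fullSig P) (hg : goodSig P) (hT : StableExp X Ψ T)
    (hw : BelievesIdentities w T) (a : PAtom S) (D : ℕ → (w.believedPart T).U) :
    Sat X (w.believedPart T) T a.toFormula D ↔
      Sat X w T (a.toFormula.and a.toFormula.box) fun x => (D x).1 := by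
  obtain ⟨β, hβ⟩ := exists_assoc w fun x => (D x).1
  have hclosed : (a.toFormula.subst β).closed := (a.closed_toFormula_subst_iff hβ).2
    fun x hx => isNamed_of_hasVar hf hg hx (D x)
  have hground := (Formula.closed_atom_iff _ _).1 hclosed
  rw [sat_and, sat_box_toFormula_iff hT hw hβ, and_iff_right hclosed]
  refine (sat_atom_believedPart_iff a.p a.args D).trans (and_congr_right fun _ => ⟨?_, ?_⟩)
  · rintro ⟨ts, hts, heval, hmem⟩
    exact hw.atom_mem hT hts hground
      (fun i => (heval i).trans (Term.evalG_subst hβ (hground i)).symm) hmem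
  · exact fun hmem => ⟨_, hground, fun i => Term.evalG_subst hβ (hground i), hmem⟩

theorem modelsF_of_modelsF_believedPart {α : Formula S} (hα : α.isAtomic) (hclosed : α.closed)
    (h : ModelsF X (w.believedPart T) Γ α) : ModelsF X w Γ α := by
  let D : ℕ → (w.believedPart T).U := fun _ => (w.believedPart T).dflt
  refine fun B => (sat_congr_of_closed (B := fun x => (D x).1) hα hclosed).1 ?_
  cases α with
  | atom p ts => exact ((sat_atom_believedPart_iff p ts D).1 (h D)).1
  | eq t s => exact (sat_eq_believedPart_iff t s D).1 (h D)
  | not | and | ex | box => exact hα.elim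

theorem modelsT_UNAax_believedPart (hw : ModelsT X w T (UNAax P)) :
    ModelsT X (w.believedPart T) T (UNAax P) := by
  rintro _ ⟨t, s, ht, hs, hts, rfl⟩ D
  have hUNA := hw _ ⟨t, s, ht, hs, hts, rfl⟩ fun x => (D x).1
  simpa only [sat_imp, sat_not, sat_box_believedPart_iff, sat_eq_believedPart_iff] using hUNA

theorem modelsT_believedPart (hP : ∀ r ∈ P, r.head ≠ []) (hf : fullSig P) (hg : goodSig P)
    (hT : StableExp X Ψ T) (hUNA : ModelsT X w T (UNAax P)) (hheads : HeadsBelieved X P w T) :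
    ModelsT X (w.believedPart T) T (tauHPv P ∪ tauEHv P) := by
  have hatom := sat_toFormula_believedPart_iff hf hg hT
    (believesIdentities_of_modelsT_UNAax hf hT hUNA)
  have hhead : ∀ r ∈ P, ∀ D : ℕ → (w.believedPart T).U,
      (∀ φ ∈ bodyHP r, Sat X (w.believedPart T) T φ D) →
        ∃ h ∈ r.head, Sat X (w.believedPart T) T (h.toFormula.and h.toFormula.box) D := by
    intro r hr D hbody
    have hnamed : ∀ x, r.hasVar x → IsNamed w (D x).1 :=
      fun x ⟨a, _, hx⟩ => isNamed_of_hasVar hf hg hx (D x)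
    have hbodyE : ∀ φ ∈ bodyE r, Sat X w T φ fun x => (D x).1 := by
      simpa only [sat_bodyHP_iff, sat_bodyE_iff, hatom, sat_box_believedPart_iff, sat_and]
        using hbody
    obtain ⟨h, hh, htrue⟩ := hheads r hr _ hnamed hbodyE
    exact ⟨h, hh, (hatom h D).2 htrue, (sat_box_believedPart_iff _ D).2 htrue.2⟩
  have hHP : ModelsT X (w.believedPart T) T (ruleEmb embHP P) :=
    (modelsT_embHP_iff hP).2 fun r hr D hbody =>
      (hhead r hr D hbody).imp fun _ => And.imp_right And.left
  have hEH : ModelsT X (w.believedPart T) T (ruleEmb embEH P) :=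
    (modelsT_embEH_iff hP).2 fun r hr D hbody => hhead r hr D (sat_bodyHP_of_sat_bodyE hbody)
  have hPIA : ModelsT X (w.believedPart T) T (PIAax P) := by
    rintro _ ⟨a, -, -, rfl⟩ D
    exact (sat_imp _ _).2 fun ha => (sat_box_believedPart_iff _ D).2 ((hatom a D).1 ha).2
  have hUNA' := modelsT_UNAax_believedPart hUNA
  exact modelsT_union_iff.2 ⟨modelsT_union_iff.2 ⟨modelsT_union_iff.2 ⟨hHP, hPIA⟩, hUNA'⟩,
    modelsT_union_iff.2 ⟨hEH, hUNA'⟩⟩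

/-! ### Criteria for inclusion of objective consequences -/

theorem cnO_subset_of_headsBelieved (hP : ∀ r ∈ P, r.head ≠ []) (hf : fullSig P)
    (hg : goodSig P) (hΦ : ∀ φ ∈ Φ, φ.boxAtomic)
    (hUNA : ∀ T, EntailsTheory X Φ T (UNAax P))
    (hΨ : ∀ T, EntailsTheory X (tauHPv P ∪ tauEHv P) T Ψ)
    (hΨΦ : ∀ T, StableExp X Ψ T → EntailsTheory X Ψ T Φ)
    (hheads : ∀ T, StableExp X Ψ T → ∀ w, ModelsT X w T Φ → HeadsBelieved X P w T) :
    CnO X Φ ⊆ CnO X Ψ :=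
  cnO_subset_of_entailsTheory hΦ hΨΦ fun T hT _ hα hclosed hent w hw =>
    modelsF_of_modelsF_believedPart hα hclosed <| hent _ <| hΨ T _ <|
      modelsT_believedPart hP hf hg hT (hUNA T w hw) (hheads T hT w hw)

theorem cnO_subset_of_progNormal (hn : progNormal P) (hP : ∀ r ∈ P, r.head ≠ [])
    (hf : fullSig P) (hg : goodSig P) (hΦ : ∀ φ ∈ Φ, φ.boxAtomic)
    (hΦEB : ∀ T, EntailsTheory X Φ T (tauEB P))
    (hΨ : ∀ T, EntailsTheory X (tauHPv P ∪ tauEHv P) T Ψ)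
    (hΨΦ : ∀ T, StableExp X Ψ T → EntailsTheory X Ψ T Φ) : CnO X Φ ⊆ CnO X Ψ :=
  cnO_subset_of_headsBelieved hP hf hg hΦ
    (fun T => (hΦEB T).trans (.of_subset Set.subset_union_right)) hΨ hΨΦ fun T hT w hw =>
    headsBelieved_of_progNormal hn hP hf hT ((hΨΦ T hT).trans (hΦEB T)) (hΦEB T w hw)

theorem cnO_tauEB_subset_of_progNormal (hn : progNormal P) (hP : ∀ r ∈ P, r.head ≠ [])
    (hf : fullSig P) (hg : goodSig P) (hΨ : ∀ T, EntailsTheory X (tauHPv P ∪ tauEHv P) T Ψ)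
    (hΨEB : ∀ T, EntailsTheory X Ψ T (tauEB P)) : CnO X (tauEB P) ⊆ CnO X Ψ :=
  cnO_subset_of_progNormal hn hP hf hg boxAtomic_of_mem_tauEB
    (fun _ => .of_subset subset_rfl) hΨ fun T _ => hΨEB T

theorem cnO_tauEHv_subset_of_progSafe (hP : ∀ r ∈ P, r.head ≠ []) (hf : fullSig P)
    (hg : goodSig P) (hs : progSafe P) (hΨ : ∀ T, EntailsTheory X (tauHPv P ∪ tauEHv P) T Ψ)
    (hUNA : ∀ T, EntailsTheory X Ψ T (UNAax P))
    (hheads : ∀ T, StableExp X Ψ T → ∀ w, ModelsT X w T Ψ → HeadsBelieved X P w T) :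
    CnO X (tauEHv P) ⊆ CnO X Ψ :=
  cnO_subset_of_headsBelieved hP hf hg boxAtomic_of_mem_tauEHv
    (fun _ => .of_subset Set.subset_union_right) hΨ
    (fun T hT w hw => modelsT_union_iff.2
      ⟨modelsT_embEH_of_headsBelieved hP hs (hheads T hT w hw), hUNA T w hw⟩)
    fun _ _ _ hw => headsBelieved_of_modelsT_tauEHv hP hw

theorem cnO_tauEB_subset_cnO_tauEH (hn : progNormal P) (hP : ∀ r ∈ P, r.head ≠ [])
    (hf : fullSig P) (hg : goodSig P) : CnO X (tauEB P) ⊆ CnO X (tauEH P) :=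
  cnO_tauEB_subset_of_progNormal hn hP hf hg (fun _ => .of_subset Set.subset_union_right)
    fun _ => entailsTheory_tauEH_tauEB hP

theorem cnO_tauEB_subset_cnO_tauHP (hn : progNormal P) (hP : ∀ r ∈ P, r.head ≠ [])
    (hf : fullSig P) (hg : goodSig P) : CnO X (tauEB P) ⊆ CnO X (tauHP P) :=
  cnO_tauEB_subset_of_progNormal hn hP hf hg
    (fun _ => .of_subset (tauHP_subset_tauHPv.trans Set.subset_union_left))
    fun _ => entailsTheory_tauHP_tauEB hP

theorem cnO_tauHP_subset_cnO_tauHPv (hn : progNormal P) (hP : ∀ r ∈ P, r.head ≠ [])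
    (hf : fullSig P) (hg : goodSig P) : CnO X (tauHP P) ⊆ CnO X (tauHPv P) :=
  cnO_subset_of_progNormal hn hP hf hg boxAtomic_of_mem_tauHP
    (fun _ => entailsTheory_tauHP_tauEB hP) (fun _ => .of_subset Set.subset_union_left)
    fun _ _ => .of_subset tauHP_subset_tauHPv

theorem cnO_tauEB_subset_cnO_tauEBv (hn : progNormal P) (hP : ∀ r ∈ P, r.head ≠ [])
    (hf : fullSig P) (hg : goodSig P) : CnO X (tauEB P) ⊆ CnO X (tauEBv P) :=
  cnO_tauEB_subset_of_progNormal hn hP hf hg (fun _ => entailsTheory_tauHPv_union_tauEHv_tauEBv hP)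
    fun _ => .of_subset tauEB_subset_tauEBv

theorem cnO_tauEH_subset_cnO_tauEB (hn : progNormal P) (hP : ∀ r ∈ P, r.head ≠ [])
    (hf : fullSig P) (hg : goodSig P) (hs : progSafe P) : CnO X (tauEH P) ⊆ CnO X (tauEB P) :=
  cnO_tauEHv_subset_of_progSafe hP hf hg hs
    (fun _ => (entailsTheory_tauHPv_union_tauEHv_tauEBv hP).trans (.of_subset tauEB_subset_tauEBv))
    (fun _ => .of_subset Set.subset_union_right)
    fun _ hT _ => headsBelieved_of_progNormal hn hP hf hT (.of_subset subset_rfl)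

theorem cnO_tauEBv_subset_cnO_tauHPv (hP : ∀ r ∈ P, r.head ≠ []) (hf : fullSig P)
    (hg : goodSig P) : CnO X (tauEBv P) ⊆ CnO X (tauHPv P) :=
  cnO_subset_of_headsBelieved hP hf hg (boxAtomic_of_mem_ruleEmb_union boxAtomic_embEB)
    (fun _ => .of_subset Set.subset_union_right) (fun _ => .of_subset Set.subset_union_left)
    (fun _ _ => entailsTheory_tauHPv_tauEBv hP)
    fun _ hT _ => headsBelieved_of_modelsT_tauEBv hP hf hT

theorem cnO_tauEHv_subset_cnO_tauEBv (hP : ∀ r ∈ P, r.head ≠ []) (hf : fullSig P)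
    (hg : goodSig P) (hs : progSafe P) : CnO X (tauEHv P) ⊆ CnO X (tauEBv P) :=
  cnO_tauEHv_subset_of_progSafe hP hf hg hs (fun _ => entailsTheory_tauHPv_union_tauEHv_tauEBv hP)
    (fun _ => .of_subset Set.subset_union_right)
    fun _ hT _ => headsBelieved_of_modelsT_tauEBv hP hf hT

end Development

/-- Inclusions between sets of objective consequences: the
inclusions of Figure 1(a) of the paper, spelled out. -/
theorem stmt11 {S : Sig} (X : Sem) :
    (∀ P : Program S, progWf P → progNormal P → fullSig P → goodSig P →
        CnO X (tauEH P) = CnO X (tauEHv P) ∧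
        CnO X (tauEB P) ⊆ CnO X (tauEH P) ∧
        CnO X (tauEB P) ⊆ CnO X (tauHP P) ∧
        CnO X (tauHP P) ⊆ CnO X (tauHPv P) ∧
        CnO X (tauEB P) ⊆ CnO X (tauEBv P) ∧
        (progSafe P → CnO X (tauEH P) ⊆ CnO X (tauEB P))) ∧
    (∀ P : Program S, progWf P → fullSig P → goodSig P →
        CnO X (tauEBv P) ⊆ CnO X (tauHPv P) ∧
        (progSafe P → CnO X (tauEHv P) ⊆ CnO X (tauEBv P))) := by
  refine ⟨fun P hwf hn hf hg => ?_, fun P hwf hf hg => ?_⟩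
  · have hP : ∀ r ∈ P, r.head ≠ [] := fun r hr => (hwf r hr).1
    exact ⟨rfl,
      cnO_tauEB_subset_cnO_tauEH hn hP hf hg,
      cnO_tauEB_subset_cnO_tauHP hn hP hf hg,
      cnO_tauHP_subset_cnO_tauHPv hn hP hf hg,
      cnO_tauEB_subset_cnO_tauEBv hn hP hf hg,
      cnO_tauEH_subset_cnO_tauEB hn hP hf hg⟩
  · have hP : ∀ r ∈ P, r.head ≠ [] := fun r hr => (hwf r hr).1
    exact ⟨cnO_tauEBv_subset_cnO_tauHPv hP hf hg, cnO_tauEHv_subset_cnO_tauEBv hP hf hg⟩
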